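/- Assume β l i j ≥ 0 for all l, i, j, α l k > 0 for all l, k, and σ² > 0. Then for every pilot configuration φ, the value G φ is the greatest element (IsGreatest) of the set { f φ μ : μ ∈ (Fin L → Fin K → Fin τ → ℂ) }; in particular the maximum over μ is attained and equals G φ, so the weighted-MSE pilot design problem of maximizing G over any feasible set of pilots is equivalent to jointly maximizing f over that feasible set and all μ. -/

import Mathlib

open Matrix ComplexConjugate
open scoped ComplexOrder

/- The maximum over `μ` splits into one maximization per user. With `D w = β φ`, completing the
square gives `2 Re⟨x, D w⟩ - Re⟨x, D x⟩ = Re⟨w, D w⟩ - Re⟨x - w, D (x - w)⟩`, whose last term is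
nonnegative and vanishes at `x = w = β D⁻¹ φ`, leaving
`Re⟨w, D w⟩ = β² Re⟨φ, D⁻¹ φ⟩`. -/

section IsGreatest

variable {ι R : Type*} [Preorder R]

lemma isGreatest_range_const_mul [Mul R] [Zero R] [PosMulMono R] {X : Type*} {g : X → R}
    {a m : R} (ha : 0 ≤ a) (h : IsGreatest (Set.range g) m) :
    IsGreatest (Set.range fun x => a * g x) (a * m) := by
  have hmono : Monotone (a * ·) := fun _ _ hle => mul_le_mul_of_nonneg_left hle ha
  rw [Set.range_comp' (a * ·) g]
  exact hmono.map_isGreatest h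

lemma isGreatest_range_sum [Fintype ι] [AddCommMonoid R] [IsOrderedAddMonoid R]
    {X : ι → Type*} {g : ∀ i, X i → R} {m : ι → R}
    (h : ∀ i, IsGreatest (Set.range (g i)) (m i)) :
    IsGreatest (Set.range fun x : ∀ i, X i => ∑ i, g i (x i)) (∑ i, m i) := by
  choose x hx using fun i => (h i).1
  refine ⟨⟨x, Finset.sum_congr rfl fun i _ => hx i⟩, ?_⟩
  rintro _ ⟨y, rfl⟩
  exact Finset.sum_le_sum fun i _ => (h i).2 ⟨y i, rfl⟩

end IsGreatest

section QuadraticForm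

variable {𝕜 n : Type*} [RCLike 𝕜] [Fintype n] {A : Matrix n n 𝕜}

lemma re_star_dotProduct_mulVec_comm (hA : A.IsHermitian) (x y : n → 𝕜) :
    RCLike.re (star x ⬝ᵥ A *ᵥ y) = RCLike.re (star y ⬝ᵥ A *ᵥ x) := by
  have hstar : star (star x ⬝ᵥ A *ᵥ y) = star y ⬝ᵥ A *ᵥ x := by
    rw [star_dotProduct, star_star, star_mulVec, hA.eq, ← dotProduct_mulVec]
  rw [← hstar, RCLike.star_def, RCLike.conj_re]

lemma two_mul_re_dotProduct_mulVec_sub_self_eq (hA : A.IsHermitian) (x w : n → 𝕜) :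
    2 * RCLike.re (star x ⬝ᵥ A *ᵥ w) - RCLike.re (star x ⬝ᵥ A *ᵥ x) =
      RCLike.re (star w ⬝ᵥ A *ᵥ w) - RCLike.re (star (x - w) ⬝ᵥ A *ᵥ (x - w)) := by
  simp only [mulVec_sub, star_sub, sub_dotProduct, dotProduct_sub, map_sub,
    re_star_dotProduct_mulVec_comm hA w x]
  ring

lemma isGreatest_range_two_mul_re_dotProduct_mulVec_sub_self (hA : A.PosSemidef) (w : n → 𝕜) :
    IsGreatest
      (Set.range fun x => 2 * RCLike.re (star x ⬝ᵥ A *ᵥ w) - RCLike.re (star x ⬝ᵥ A *ᵥ x))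
      (RCLike.re (star w ⬝ᵥ A *ᵥ w)) := by
  simp only [two_mul_re_dotProduct_mulVec_sub_self_eq hA.isHermitian _ w]
  refine ⟨⟨w, by simp⟩, ?_⟩
  rintro _ ⟨x, rfl⟩
  exact sub_le_self _ (hA.re_dotProduct_nonneg (x - w))

/-- The quadratic transform of the matrix ratio `b² vᴴ A⁻¹ v`: the surrogate, free of the inverse of
`A`, whose maximum over the auxiliary vector `x` recovers the ratio. -/
noncomputable def quadraticTransform (A : Matrix n n 𝕜) (b : ℝ) (v x : n → 𝕜) : ℝ :=
  2 * b * RCLike.re (star x ⬝ᵥ v) - RCLike.re (star x ⬝ᵥ A *ᵥ x)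

variable [DecidableEq n]

lemma isGreatest_range_quadraticTransform (hA : A.PosDef) (b : ℝ) (v : n → 𝕜) :
    IsGreatest (Set.range (quadraticTransform A b v))
      (b ^ 2 * RCLike.re (star v ⬝ᵥ A⁻¹ *ᵥ v)) := by
  have hAw : A *ᵥ (b • A⁻¹ *ᵥ v) = b • v := by
    rw [mulVec_smul, mulVec_mulVec, mul_nonsing_inv _ ((isUnit_iff_isUnit_det A).mp hA.isUnit),
      one_mulVec]
  have hvalue : RCLike.re (star (b • A⁻¹ *ᵥ v) ⬝ᵥ A *ᵥ (b • A⁻¹ *ᵥ v)) =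
      b ^ 2 * RCLike.re (star v ⬝ᵥ A⁻¹ *ᵥ v) := by
    rw [hAw, star_smul, smul_dotProduct, dotProduct_smul, star_mulVec, hA.isHermitian.inv.eq,
      ← dotProduct_mulVec, star_trivial, RCLike.smul_re, RCLike.smul_re, ← mul_assoc, sq]
  have hmax :=
    isGreatest_range_two_mul_re_dotProduct_mulVec_sub_self hA.posSemidef (b • A⁻¹ *ᵥ v)
  rw [hvalue, hAw] at hmax
  simp only [dotProduct_smul, RCLike.smul_re, ← mul_assoc] at hmax
  exact hmax

end QuadraticForm

section Pilots

variable {𝕜 ι κ n : Type*} [RCLike 𝕜] [Fintype ι] [Fintype κ] [DecidableEq n]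

/-- The covariance matrix `D` of the signal received at one base station: user `(i, j)` sends the
pilot `φ i j` through a channel of gain `b i j`, in white noise of power `c`. -/
def pilotCovariance (c : ℝ) (b : ι → κ → ℝ) (φ : ι → κ → n → 𝕜) : Matrix n n 𝕜 :=
  c • 1 + ∑ i, ∑ j, b i j • vecMulVec (φ i j) (star (φ i j))

lemma pilotCovariance_apply (c : ℝ) (b : ι → κ → ℝ) (φ : ι → κ → n → 𝕜) (s t : n) :
    pilotCovariance c b φ s t =
      (c : 𝕜) * (if s = t then 1 else 0) + ∑ i, ∑ j, (b i j : 𝕜) * φ i j s * conj (φ i j t) := by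
  simp [pilotCovariance, Matrix.sum_apply, Matrix.one_apply, vecMulVec_apply,
    RCLike.real_smul_eq_coe_mul, mul_assoc]

lemma posDef_pilotCovariance [Finite n] {c : ℝ} (hc : 0 < c) {b : ι → κ → ℝ}
    (hb : ∀ i j, 0 ≤ b i j) (φ : ι → κ → n → 𝕜) : (pilotCovariance c b φ).PosDef :=
  (PosDef.one.smul hc).add_posSemidef <| posSemidef_sum _ fun i _ => posSemidef_sum _ fun j _ =>
    (posSemidef_vecMulVec_self_star (φ i j)).smul (hb i j)

theorem pilot_quadratic_transform_isGreatest_general [Fintype n]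
    {D : ι → Matrix n n 𝕜} (hD : ∀ l, (D l).PosDef)
    {α : ι → κ → ℝ} (hα : ∀ l k, 0 ≤ α l k) (β : ι → κ → ℝ) (φ : ι → κ → n → 𝕜) :
    IsGreatest
      (Set.range fun μ : ι → κ → n → 𝕜 =>
        ∑ l, ∑ k, α l k * quadraticTransform (D l) (β l k) (φ l k) (μ l k))
      (∑ l, ∑ k, α l k * β l k ^ 2 * RCLike.re (star (φ l k) ⬝ᵥ (D l)⁻¹ *ᵥ φ l k)) := by
  simp only [mul_assoc (α _ _)]
  exact isGreatest_range_sum fun l => isGreatest_range_sum fun k => isGreatest_range_const_mul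
    (hα l k) (isGreatest_range_quadraticTransform (hD l) (β l k) (φ l k))

end Pilots

/-- Multicell pilot design: assuming nonnegative fading `β`, positive weights `α`
and positive noise `σ²`, for every pilot configuration `φ` the weighted-MSE
objective `G φ` is the greatest element of the set `{ f φ μ : μ }` of values of
the quadratic-transform objective; hence maximizing `G` over any feasible pilot
set is equivalent to jointly maximizing `f` over that set and all `μ`. -/
theorem pilot_quadratic_transform_isGreatest (L K τ : ℕ)
    (hL : 0 < L) (hK : 0 < K) (hτ : 0 < τ)
    (σ2 : ℝ) (hσ2 : 0 < σ2)
    (β : Fin L → Fin L → Fin K → ℝ) (hβ : ∀ l i j, 0 ≤ β l i j)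
    (α : Fin L → Fin K → ℝ) (hα : ∀ l k, 0 < α l k)
    (D : Fin L → (Fin L → Fin K → (Fin τ → ℂ)) → Matrix (Fin τ) (Fin τ) ℂ)
    (hD : ∀ l φ s t, D l φ s t =
      (σ2 : ℂ) * (if s = t then 1 else 0) +
        ∑ i : Fin L, ∑ j : Fin K, (β l i j : ℂ) * (φ i j s) * conj (φ i j t))
    (G : (Fin L → Fin K → (Fin τ → ℂ)) → ℝ)
    (hG : ∀ φ, G φ = ∑ l : Fin L, ∑ k : Fin K,
      α l k * (β l l k) ^ 2 * (star (φ l k) ⬝ᵥ ((D l φ)⁻¹ *ᵥ (φ l k))).re)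
    (f : (Fin L → Fin K → (Fin τ → ℂ)) → (Fin L → Fin K → (Fin τ → ℂ)) → ℝ)
    (hf : ∀ φ μ, f φ μ = ∑ l : Fin L, ∑ k : Fin K,
      α l k * (2 * (β l l k) * (star (μ l k) ⬝ᵥ (φ l k)).re -
        (star (μ l k) ⬝ᵥ ((D l φ) *ᵥ (μ l k))).re))
    (φ : Fin L → Fin K → (Fin τ → ℂ)) :
    IsGreatest {y : ℝ | ∃ μ : Fin L → Fin K → (Fin τ → ℂ), y = f φ μ} (G φ) := by
  have hpos (l : Fin L) : (D l φ).PosDef := by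
    have hcov : D l φ = pilotCovariance σ2 (β l) φ :=
      Matrix.ext fun s t => (hD l φ s t).trans (pilotCovariance_apply σ2 (β l) φ s t).symm
    exact hcov ▸ posDef_pilotCovariance hσ2 (hβ l) φ
  have hrange : {y | ∃ μ, y = f φ μ} = Set.range (f φ) :=
    Set.ext fun _ => exists_congr fun _ => eq_comm
  rw [hrange, hG, funext (hf φ)]
  exact pilot_quadratic_transform_isGreatest_general hpos (fun l k => (hα l k).le)
    (fun l k => β l l k) φ
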